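/- arXiv:1702.01677 — 2 statements merged into one kernel-verified Lean document; each statement's English description precedes it below -/
import Mathlib

section
/- Let G be a task graph with present bias β ∈ (0,1] and let c̃ be the MinMaxPathApprox cost configuration (for some choice of minmax path P and successor map ς). Then at every node v the agent may visit on a greedy walk from s under c̃, her lowest perceived cost satisfies ζ_c̃(v) ≤ 2ϱ; consequently c̃ is motivating for the reward 2ϱ/β. Since every reward admitting a motivating cost configuration is at least ϱ/β, the reward 2ϱ/β is within a factor 2 of the infimum of motivating rewards. -/
/-!
The argument uses only the Bellman equations for `d` (with values attained because a
DAG has finitely many walks) and well-founded induction along edges.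

*Upper bound.* Every `ς`-edge leaving `P` is charged at most the original cost of the
`ς`-segment up to the next node of `P`, so following `ς` shows `d_c̃ ≤ 2 d`
(`dcost_add_seg_le`). Hence at a node of `P` the edge along `P` has perceived cost at most
`2ϱ`. Suppose `ϱ > 0`. An edge with extra cost `3ϱ/β > 2ϱ` is then never taken, nor planned to
be taken, so an agent off `P` left it at some `v'` along `ς` and has followed `ς` since. Along
this segment `d_c̃` does not increase, and each edge `(v, ς v)` of it costs at most
`c̃(v', ς v')`; so `η_c̃(v, ς v) ≤ η_c̃(v', ς v') ≤ 2ϱ` (`detour_eta_le`). If `ϱ = 0`, then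
`d_c̃` vanishes at every visited node, and `ζ_c̃ ≤ d_c̃`.

*Lower bound.* A greedy walk to `t` under a motivating configuration has all its perceived
costs at most `β r`; removing the extra costs only lowers them, so `ϱ ≤ β r`.
-/

/-!
Framework: task graphs, present-biased agents, perceived costs, greedy walks,
motivating rewards, cost configurations and subgraphs
(Kleinberg–Oren model, following Albers–Kraft).
-/

variable {V : Type} [Fintype V] [DecidableEq V]

/-- The list of (directed) edges traversed by a walk given as a list of vertices. -/
def walkEdges (p : List V) : List (V × V) := p.zip p.tail

/-- `p` is a walk in the edge set `E`: consecutive vertices are joined by edges. -/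
def IsWalk (E : Finset (V × V)) (p : List V) : Prop :=
  List.Chain' (fun u v : V => (u, v) ∈ E) p

/-- `p` is a walk in `E` from `a` to `b`. -/
def IsWalkFrom (E : Finset (V × V)) (p : List V) (a b : V) : Prop :=
  IsWalk E p ∧ p.head? = some a ∧ p.getLast? = some b

/-- There is a walk in `E` from `a` to `b`. -/
def Reaches (E : Finset (V × V)) (a b : V) : Prop :=
  ∃ p : List V, IsWalkFrom E p a b

/-- Total cost of a walk. -/
noncomputable def walkCost (c : V × V → ℝ) (p : List V) : ℝ :=
  ((walkEdges p).map c).sum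

/-- A task graph: a finite DAG with source `s`, target `t`, nonnegative edge
costs, in which every node lies on some directed path from `s` to `t`. -/
structure TaskGraph (V : Type) [Fintype V] [DecidableEq V] where
  E : Finset (V × V)
  s : V
  t : V
  c : V × V → ℝ
  c_nonneg : ∀ e ∈ E, 0 ≤ c e
  acyclic : ∀ p : List V, IsWalk E p → p.Nodup
  onPath : ∀ v : V, ∃ p : List V, IsWalkFrom E p s t ∧ v ∈ p

/-- `dcost E c t v` : cost of a cheapest walk from `v` to `t` in `E` w.r.t. costs `c`. -/
noncomputable def dcost (E : Finset (V × V)) (c : V × V → ℝ) (t v : V) : ℝ :=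
  sInf (walkCost c '' {p : List V | IsWalkFrom E p v t})

/-- Perceived cost `η(v,w) = c(v,w) + β d(w)` of an edge for a `β`-present-biased agent. -/
noncomputable def etaCost (E : Finset (V × V)) (c : V × V → ℝ) (t : V) (β : ℝ)
    (e : V × V) : ℝ :=
  c e + β * dcost E c t e.2

/-- Lowest perceived cost `ζ(v)`: the infimum of `η(v,w)` over edges `(v,w) ∈ E`
whose head `w` admits a continuation to `t` (i.e. over the agent's possible plans). -/
noncomputable def zetaCost (E : Finset (V × V)) (c : V × V → ℝ) (t : V) (β : ℝ)
    (v : V) : ℝ :=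
  sInf {x : ℝ | ∃ w : V, (v, w) ∈ E ∧ Reaches E w t ∧ etaCost E c t β (v, w) = x}

/-- One step of the agent's greedy walk for reward `r`: she traverses only
edges realizing the lowest perceived cost, and only if `ζ(v) ≤ β r`. -/
def GreedyStep (E : Finset (V × V)) (c : V × V → ℝ) (t : V) (β r : ℝ) (v w : V) : Prop :=
  v ≠ t ∧ (v, w) ∈ E ∧ Reaches E w t ∧
    etaCost E c t β (v, w) = zetaCost E c t β v ∧ zetaCost E c t β v ≤ β * r

/-- Nodes the agent may visit on some greedy walk from `s`. -/
inductive AgentReach (E : Finset (V × V)) (c : V × V → ℝ) (s t : V) (β r : ℝ) : V → Prop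
  | start : AgentReach E c s t β r s
  | step {v w : V} : AgentReach E c s t β r v → GreedyStep E c t β r v w →
      AgentReach E c s t β r w

/-- The task graph (with edge set `E`, costs `c`) is motivating for reward `r`:
at every node the agent may reach, she neither abandons nor gets stuck,
i.e. she can always perform a greedy step (hence, the graph being a finite DAG,
she reaches `t` on every greedy walk). -/
def Motivating (E : Finset (V × V)) (c : V × V → ℝ) (s t : V) (β r : ℝ) : Prop :=
  ∀ v : V, AgentReach E c s t β r v → v ≠ t → ∃ w : V, GreedyStep E c t β r v w

/-- A complete greedy walk of the agent from `s` to `t`. -/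
def AgentWalk (E : Finset (V × V)) (c : V × V → ℝ) (s t : V) (β r : ℝ) (p : List V) : Prop :=
  IsWalkFrom E p s t ∧ List.Chain' (GreedyStep E c t β r) p

/-- An initial segment of a greedy walk of the agent starting at `s`. -/
def GreedyPrefix (E : Finset (V × V)) (c : V × V → ℝ) (s t : V) (β r : ℝ) (p : List V) : Prop :=
  p.head? = some s ∧ List.Chain' (GreedyStep E c t β r) p

/-- A cost configuration: nonnegative extra costs on the edges. -/
def CostConfig (c' : V × V → ℝ) : Prop := ∀ e : V × V, 0 ≤ c' e

/-- The modified costs obtained by applying a cost configuration to `G`. -/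
noncomputable def addc (G : TaskGraph V) (c' : V × V → ℝ) : V × V → ℝ :=
  fun e => G.c e + c' e

/-- The cost configuration `c'` is motivating for reward `r` on `G`. -/
def MotivatingConfig (G : TaskGraph V) (β r : ℝ) (c' : V × V → ℝ) : Prop :=
  Motivating G.E (addc G c') G.s G.t β r

/-- The subgraph of `G` with edge set `E'` (retaining an `s`–`t` path) is
motivating for reward `r`; all quantities are computed within the subgraph. -/
def MotivatingSubgraph (G : TaskGraph V) (β r : ℝ) (E' : Finset (V × V)) : Prop :=
  E' ⊆ G.E ∧ (∃ p : List V, IsWalkFrom E' p G.s G.t) ∧ Motivating E' G.c G.s G.t β r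

/-- Maximum of `f` over the edges of a walk (`0` if the walk has no edges; all
relevant values are nonnegative). -/
noncomputable def maxEdge (f : V × V → ℝ) (p : List V) : ℝ :=
  ((walkEdges p).map f).foldr max 0

/-- `ϱ`: the minimum over all `s`–`t` paths `P` of the maximum perceived edge cost
`η_0̃(e)` over the edges `e` of `P`. -/
noncomputable def minmaxRho (G : TaskGraph V) (β : ℝ) : ℝ :=
  sInf ((fun p => maxEdge (etaCost G.E G.c G.t β) p) ''
    {p : List V | IsWalkFrom G.E p G.s G.t})

/-- The `ς`-walk starting at `v`: `v, ς v, ς (ς v), …` until `t` is reached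
(with fuel `n`, which is taken to be the number of nodes). -/
def sigmaWalk (ς : V → V) (t : V) : ℕ → V → List V
  | 0, v => [v]
  | n + 1, v => if v = t then [v] else v :: sigmaWalk ς t n (ς v)

/-- The initial segment of `q` up to (and including) its first node lying on `P`. -/
def segUpToMem (P : List V) (q : List V) : List V :=
  q.takeWhile (fun u => decide (u ∉ P)) ++ (q.dropWhile (fun u => decide (u ∉ P))).take 1

/-- `P` is a minmax path: an `s`–`t` path whose maximum perceived edge cost
attains `ϱ`. -/
def IsMinmaxPath (G : TaskGraph V) (β : ℝ) (P : List V) : Prop :=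
  IsWalkFrom G.E P G.s G.t ∧ maxEdge (etaCost G.E G.c G.t β) P = minmaxRho G β

/-- `ς` is a cheapest-path successor map: for each `v ≠ t`, `(v, ς v)` is the
first edge of some cheapest path from `v` to `t` under the original costs. -/
def IsCheapestSucc (G : TaskGraph V) (ς : V → V) : Prop :=
  ∀ v : V, v ≠ G.t → (v, ς v) ∈ G.E ∧
    G.c (v, ς v) + dcost G.E G.c G.t (ς v) = dcost G.E G.c G.t v

/-- `c'` is the MinMaxPathApprox cost configuration for the minmax path `P` and
the cheapest-path successor map `ς`: edges of `P`, and `ς`-edges leaving nodes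
not on `P`, are free; edges neither on `P` nor `ς`-edges cost `3ϱ/β` extra; and a
`ς`-edge leaving a node `v` of `P` (not along `P`) costs the value of a most
expensive edge of the `ς`-path of `v` between `v` and its next intersection with `P`. -/
def IsMMPA (G : TaskGraph V) (β : ℝ) (P : List V) (ς : V → V) (c' : V × V → ℝ) : Prop :=
  IsMinmaxPath G β P ∧ IsCheapestSucc G ς ∧
  (∀ e ∈ walkEdges P, c' e = 0) ∧
  (∀ v w : V, (v, w) ∉ walkEdges P → w = ς v → v ∉ P → c' (v, w) = 0) ∧
  (∀ v w : V, (v, w) ∉ walkEdges P → w ≠ ς v → c' (v, w) = 3 * minmaxRho G β / β) ∧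
  (∀ v w : V, (v, w) ∉ walkEdges P → w = ς v → v ∈ P →
      c' (v, w) = maxEdge G.c
        (v :: segUpToMem P (sigmaWalk ς G.t (Fintype.card V) v).tail))

set_option linter.unusedSectionVars false

/-! ### Walks -/

section Walks

theorem walkEdges_cons_cons (a b : V) (l : List V) :
    walkEdges (a :: b :: l) = (a, b) :: walkEdges (b :: l) := rfl

theorem mem_of_walkEdges {p : List V} {a b : V} (h : (a, b) ∈ walkEdges p) :
    a ∈ p ∧ b ∈ p :=
  ⟨(List.of_mem_zip h).1, List.mem_of_mem_tail (List.of_mem_zip h).2⟩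

theorem walkEdges_subset {E : Finset (V × V)} {p : List V} (hp : IsWalk E p) :
    ∀ e ∈ walkEdges p, e ∈ E := by
  induction p with
  | nil => intro e he; simp [walkEdges] at he
  | cons a l ih =>
    cases l with
    | nil => intro e he; simp [walkEdges] at he
    | cons b l =>
      have hp' := List.isChain_cons_cons.1 hp
      intro e he
      rw [walkEdges_cons_cons] at he
      rcases List.mem_cons.1 he with rfl | he
      · exact hp'.1
      · exact ih hp'.2 e he

theorem isWalkFrom_cons {E : Finset (V × V)} {p : List V} {v w t : V}
    (hp : IsWalkFrom E p w t) (h : (v, w) ∈ E) : IsWalkFrom E (v :: p) v t := by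
  obtain ⟨h1, h2, h3⟩ := hp
  cases p with
  | nil => simp at h2
  | cons a l =>
    simp only [List.head?_cons, Option.some.injEq] at h2
    subst h2
    exact ⟨List.isChain_cons_cons.2 ⟨h, h1⟩, rfl, by simpa using h3⟩

theorem isWalkFrom_uncons {E : Finset (V × V)} {p : List V} {v t : V}
    (hp : IsWalkFrom E p v t) (hv : v ≠ t) :
    ∃ w l, p = v :: w :: l ∧ (v, w) ∈ E ∧ IsWalkFrom E (w :: l) w t := by
  obtain ⟨h1, h2, h3⟩ := hp
  match p, h1, h2, h3 with
  | [], _, h2, _ => simp at h2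
  | [a], _, h2, h3 => simp at h2 h3; exact absurd (h2.symm.trans h3) hv
  | a :: b :: l, h1, h2, h3 =>
    simp only [List.head?_cons, Option.some.injEq] at h2
    subst h2
    have h1' := List.isChain_cons_cons.1 h1
    exact ⟨b, l, rfl, h1'.1, h1'.2, rfl, by simpa using h3⟩

theorem isWalkFrom_suffix {E : Finset (V × V)} {p : List V} {a t v : V}
    (hp : IsWalkFrom E p a t) (hv : v ∈ p) :
    ∃ l₁ l₂, p = l₁ ++ v :: l₂ ∧ IsWalkFrom E (v :: l₂) v t := by
  obtain ⟨l₁, l₂, rfl⟩ := List.append_of_mem hv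
  refine ⟨l₁, l₂, rfl, ?_, rfl, ?_⟩
  · exact List.IsChain.right_of_append hp.1
  · simpa using hp.2.2

theorem mem_walkEdges_append (l₁ l : List V) (e : V × V) (h : e ∈ walkEdges l) :
    e ∈ walkEdges (l₁ ++ l) := by
  induction l₁ with
  | nil => exact h
  | cons a l₁ ih =>
    cases hl : l₁ ++ l with
    | nil => rw [hl] at ih; simp [walkEdges] at ih
    | cons b m =>
      rw [List.cons_append, hl, walkEdges_cons_cons, ← hl]
      exact List.mem_cons_of_mem _ ih

theorem exists_walkEdges_of_mem {E : Finset (V × V)} {p : List V} {a t v : V}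
    (hp : IsWalkFrom E p a t) (hv : v ∈ p) (hvt : v ≠ t) : ∃ w, (v, w) ∈ walkEdges p := by
  obtain ⟨l₁, l₂, rfl, h2⟩ := isWalkFrom_suffix hp hv
  obtain ⟨w, l, h, -⟩ := isWalkFrom_uncons h2 hvt
  refine ⟨w, mem_walkEdges_append _ _ _ ?_⟩
  rw [h, walkEdges_cons_cons]
  exact List.mem_cons_self

theorem target_mem {E : Finset (V × V)} {p : List V} {a t : V}
    (hp : IsWalkFrom E p a t) : t ∈ p := List.mem_of_getLast? hp.2.2

theorem source_mem {E : Finset (V × V)} {p : List V} {a t : V}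
    (hp : IsWalkFrom E p a t) : a ∈ p := List.mem_of_mem_head? hp.2.1

theorem maxEdge_nonneg (f : V × V → ℝ) (p : List V) : 0 ≤ maxEdge f p := by
  unfold maxEdge
  induction (walkEdges p).map f with
  | nil => simp
  | cons a l ih => simp [ih]

theorem le_maxEdge (f : V × V → ℝ) (p : List V) (e : V × V) (he : e ∈ walkEdges p) :
    f e ≤ maxEdge f p := by
  unfold maxEdge
  revert he
  induction walkEdges p with
  | nil => intro he; simp at he
  | cons a l ih =>
    intro he
    simp only [List.map_cons, List.foldr_cons]
    rcases List.mem_cons.1 he with rfl | he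
    · exact le_max_left _ _
    · exact le_max_of_le_right (ih he)

theorem maxEdge_le (f : V × V → ℝ) (p : List V) (x : ℝ) (hx : 0 ≤ x)
    (h : ∀ e ∈ walkEdges p, f e ≤ x) : maxEdge f p ≤ x := by
  unfold maxEdge
  revert h
  induction walkEdges p with
  | nil => intro _; simpa using hx
  | cons a l ih =>
    intro h
    simp only [List.map_cons, List.foldr_cons]
    exact max_le (h a List.mem_cons_self) (ih fun e he => h e (List.mem_cons_of_mem _ he))

theorem walkCost_cons_cons (f : V × V → ℝ) (a b : V) (l : List V) :
    walkCost f (a :: b :: l) = f (a, b) + walkCost f (b :: l) := by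
  simp [walkCost, walkEdges_cons_cons]

theorem walkCost_nonneg (f : V × V → ℝ) (p : List V) (h : ∀ e ∈ walkEdges p, 0 ≤ f e) :
    0 ≤ walkCost f p := by
  apply List.sum_nonneg
  intro x hx
  obtain ⟨e, he, rfl⟩ := List.mem_map.1 hx
  exact h e he

theorem maxEdge_le_walkCost (f : V × V → ℝ) (p : List V) (h : ∀ e ∈ walkEdges p, 0 ≤ f e) :
    maxEdge f p ≤ walkCost f p := by
  refine maxEdge_le _ _ _ (walkCost_nonneg f p h) fun e he => ?_
  refine List.single_le_sum ?_ _ (List.mem_map_of_mem he)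
  intro x hx
  obtain ⟨e, he, rfl⟩ := List.mem_map.1 hx
  exact h e he

end Walks

/-! ### Cheapest paths in a task graph -/

section Bellman

variable (G : TaskGraph V)

theorem exists_walk (v : V) : ∃ p, IsWalkFrom G.E p v G.t := by
  obtain ⟨p, hp, hv⟩ := G.onPath v
  obtain ⟨_, l₂, -, h⟩ := isWalkFrom_suffix hp hv
  exact ⟨_, h⟩

theorem reaches (v : V) : Reaches G.E v G.t := exists_walk G v

theorem edge_wf : WellFounded (fun w v : V => (v, w) ∈ G.E) := by
  have key : ∀ a b, Relation.TransGen (fun v w : V => (v, w) ∈ G.E) a b →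
      ∃ p, IsWalk G.E (a :: p) ∧ b ∈ p := by
    intro a b h
    induction h using Relation.TransGen.head_induction_on with
    | single h => exact ⟨[b], List.isChain_pair.2 h, by simp⟩
    | head h _ ih =>
      obtain ⟨p, hp, hb⟩ := ih
      exact ⟨_ :: p, List.isChain_cons_cons.2 ⟨h, hp⟩, List.mem_cons_of_mem _ hb⟩
  have : IsTrans V (Relation.TransGen (fun w v : V => (v, w) ∈ G.E)) :=
    ⟨fun _ _ _ => Relation.TransGen.trans⟩
  have : Std.Irrefl (Relation.TransGen (fun w v : V => (v, w) ∈ G.E)) := by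
    refine ⟨fun a ha => ?_⟩
    obtain ⟨p, hp, hb⟩ := key a a (Relation.transGen_swap.1 ha)
    exact (List.nodup_cons.1 (G.acyclic _ hp)).1 hb
  exact Subrelation.wf (fun h => Relation.TransGen.single h)
    (Finite.wellFounded_of_trans_of_irrefl
      (Relation.TransGen (fun w v : V => (v, w) ∈ G.E)))

variable {G} {c : V × V → ℝ}

theorem bddBelow_costs (hc : ∀ e ∈ G.E, 0 ≤ c e) (v : V) :
    BddBelow (walkCost c '' {p : List V | IsWalkFrom G.E p v G.t}) := by
  refine ⟨0, ?_⟩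
  rintro _ ⟨p, hp, rfl⟩
  exact walkCost_nonneg _ _ fun e he => hc e (walkEdges_subset hp.1 e he)

theorem dcost_nonneg (hc : ∀ e ∈ G.E, 0 ≤ c e) (v : V) : 0 ≤ dcost G.E c G.t v := by
  apply Real.sInf_nonneg
  rintro _ ⟨p, hp, rfl⟩
  exact walkCost_nonneg _ _ fun e he => hc e (walkEdges_subset hp.1 e he)

/-- The minimum in `dcost` is attained: walks of a DAG have no repeated node, so there are
finitely many of them. -/
theorem exists_dcost_eq (G : TaskGraph V) (c : V × V → ℝ) (v : V) :
    ∃ p, IsWalkFrom G.E p v G.t ∧ walkCost c p = dcost G.E c G.t v := by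
  have hfin : {p : List V | IsWalkFrom G.E p v G.t}.Finite :=
    (Set.finite_coe_iff.1 (inferInstanceAs (Finite {l : List V // l.Nodup}))).subset fun p hp => G.acyclic p hp.1
  have hne : {p : List V | IsWalkFrom G.E p v G.t}.Nonempty := exists_walk G v
  exact (hne.image (walkCost c)).csInf_mem (hfin.image _)

theorem dcost_target (hc : ∀ e ∈ G.E, 0 ≤ c e) : dcost G.E c G.t G.t = 0 := by
  refine le_antisymm ?_ (dcost_nonneg hc _)
  refine csInf_le (bddBelow_costs hc _) ⟨[G.t], ⟨?_, rfl, rfl⟩, ?_⟩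
  · exact List.isChain_singleton _
  · simp [walkCost, walkEdges]

theorem dcost_le (hc : ∀ e ∈ G.E, 0 ≤ c e) {v w : V} (h : (v, w) ∈ G.E) :
    dcost G.E c G.t v ≤ c (v, w) + dcost G.E c G.t w := by
  obtain ⟨p, hp, hcost⟩ := exists_dcost_eq G c w
  refine csInf_le (bddBelow_costs hc _) ⟨v :: p, isWalkFrom_cons hp h, ?_⟩
  obtain ⟨-, h2, -⟩ := hp
  cases p with
  | nil => simp at h2
  | cons a l =>
    simp only [List.head?_cons, Option.some.injEq] at h2
    subst h2
    rw [walkCost_cons_cons, hcost]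

theorem exists_dcost_step (hc : ∀ e ∈ G.E, 0 ≤ c e) {v : V} (hv : v ≠ G.t) :
    ∃ w, (v, w) ∈ G.E ∧ dcost G.E c G.t v = c (v, w) + dcost G.E c G.t w := by
  obtain ⟨p, hp, hcost⟩ := exists_dcost_eq G c v
  obtain ⟨w, l, rfl, hE, hw⟩ := isWalkFrom_uncons hp hv
  refine ⟨w, hE, le_antisymm (dcost_le hc hE) ?_⟩
  rw [← hcost, walkCost_cons_cons]
  exact add_le_add_right (csInf_le (bddBelow_costs hc _) ⟨_, hw, rfl⟩) _

theorem dcost_mono {c₁ c₂ : V × V → ℝ} (h₁ : ∀ e ∈ G.E, 0 ≤ c₁ e)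
    (h₁₂ : ∀ e, c₁ e ≤ c₂ e) (v : V) : dcost G.E c₁ G.t v ≤ dcost G.E c₂ G.t v := by
  have h₂ : ∀ e ∈ G.E, 0 ≤ c₂ e := fun e he => (h₁ e he).trans (h₁₂ e)
  induction v using (edge_wf G).induction with
  | _ v ih =>
    by_cases hv : v = G.t
    · subst hv; rw [dcost_target h₁, dcost_target h₂]
    · obtain ⟨w, hw, heq⟩ := exists_dcost_step h₂ hv
      have := dcost_le h₁ hw
      have := ih w hw
      have := h₁₂ (v, w)
      linarith

/-! ### Lowest perceived costs -/

theorem finite_etas (G : TaskGraph V) (c : V × V → ℝ) (β : ℝ) (v : V) :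
    {x : ℝ | ∃ w : V, (v, w) ∈ G.E ∧ Reaches G.E w G.t ∧
      etaCost G.E c G.t β (v, w) = x}.Finite :=
  (Set.finite_range fun w => etaCost G.E c G.t β (v, w)).subset
    fun _ ⟨w, _, _, h⟩ => ⟨w, h⟩

theorem zetaCost_le (c : V × V → ℝ) (β : ℝ) {v w : V} (h : (v, w) ∈ G.E) :
    zetaCost G.E c G.t β v ≤ etaCost G.E c G.t β (v, w) :=
  csInf_le (finite_etas G c β v).bddBelow ⟨w, h, reaches G w, rfl⟩

theorem exists_eq_zetaCost (G : TaskGraph V) (c : V × V → ℝ) (β : ℝ) {v : V} (hv : v ≠ G.t) :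
    ∃ w, (v, w) ∈ G.E ∧ etaCost G.E c G.t β (v, w) = zetaCost G.E c G.t β v := by
  obtain ⟨p, hp⟩ := exists_walk G v
  obtain ⟨w, -, -, hE, -⟩ := isWalkFrom_uncons hp hv
  have hne : {x : ℝ | ∃ w : V, (v, w) ∈ G.E ∧ Reaches G.E w G.t ∧
      etaCost G.E c G.t β (v, w) = x}.Nonempty := ⟨_, w, hE, reaches G w, rfl⟩
  obtain ⟨w, h1, -, h2⟩ := hne.csInf_mem (finite_etas G c β v)
  exact ⟨w, h1, h2⟩

theorem zetaCost_le_dcost (hc : ∀ e ∈ G.E, 0 ≤ c e) {β : ℝ} (hβ1 : β ≤ 1) {v : V}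
    (hv : v ≠ G.t) : zetaCost G.E c G.t β v ≤ dcost G.E c G.t v := by
  obtain ⟨w, hw, heq⟩ := exists_dcost_step hc hv
  have h1 := zetaCost_le c β hw
  have h2 := mul_le_of_le_one_left (dcost_nonneg hc w) hβ1
  simp only [etaCost] at h1
  linarith

end Bellman

/-! ### Segments of the cheapest-path successor map -/

section Seg

theorem segUpToMem_cons_mem {P : List V} {x : V} (q : List V) (h : x ∈ P) :
    segUpToMem P (x :: q) = [x] := by simp [segUpToMem, h]

theorem segUpToMem_cons_not_mem {P : List V} {x : V} (q : List V) (h : x ∉ P) :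
    segUpToMem P (x :: q) = x :: segUpToMem P q := by simp [segUpToMem, h]

theorem sigmaWalk_eq_cons (ς : V → V) (t : V) (n : ℕ) (x : V) :
    ∃ q, sigmaWalk ς t n x = x :: q := by
  cases n with
  | zero => exact ⟨_, rfl⟩
  | succ n =>
    unfold sigmaWalk
    split_ifs <;> exact ⟨_, rfl⟩

/-- The part of the `ς`-walk of `x` (with fuel `n`) up to its first node on `P`. -/
def seg (P : List V) (ς : V → V) (t : V) (n : ℕ) (x : V) : List V :=
  segUpToMem P (sigmaWalk ς t n x)

theorem seg_eq_cons (P : List V) (ς : V → V) (t : V) (n : ℕ) (x : V) :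
    ∃ q, seg P ς t n x = x :: q := by
  obtain ⟨q, hq⟩ := sigmaWalk_eq_cons ς t n x
  unfold seg
  rw [hq]
  by_cases h : x ∈ P
  · exact ⟨_, segUpToMem_cons_mem q h⟩
  · exact ⟨_, segUpToMem_cons_not_mem q h⟩

theorem seg_of_mem {P : List V} (ς : V → V) (t : V) (n : ℕ) {x : V} (h : x ∈ P) :
    seg P ς t n x = [x] := by
  obtain ⟨q, hq⟩ := sigmaWalk_eq_cons ς t n x
  unfold seg
  rw [hq, segUpToMem_cons_mem q h]

theorem seg_zero (P : List V) (ς : V → V) (t x : V) : seg P ς t 0 x = [x] := by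
  by_cases h : x ∈ P <;> simp [seg, sigmaWalk, segUpToMem, h]

theorem seg_succ {P : List V} (ς : V → V) {t : V} (n : ℕ) {x : V} (h : x ∉ P) (hxt : x ≠ t) :
    seg P ς t (n + 1) x = x :: seg P ς t n (ς x) := by
  simp [seg, sigmaWalk, hxt, segUpToMem_cons_not_mem _ h]

theorem walkEdges_cons_seg (P : List V) (ς : V → V) (t : V) (n : ℕ) (v x : V) :
    walkEdges (v :: seg P ς t n x) = (v, x) :: walkEdges (seg P ς t n x) := by
  obtain ⟨q, hq⟩ := seg_eq_cons P ς t n x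
  rw [hq, walkEdges_cons_cons]

theorem walkCost_cons_seg (f : V × V → ℝ) (P : List V) (ς : V → V) (t : V) (n : ℕ) (v x : V) :
    walkCost f (v :: seg P ς t n x) = f (v, x) + walkCost f (seg P ς t n x) := by
  simp [walkCost, walkEdges_cons_seg]

/-- With fuel exceeding `k`, the segment of `x` contains the `ς`-edge leaving the `k`-th
iterate, as long as `P` has not been met. -/
theorem iterate_mem_seg {P : List V} {ς : V → V} {t : V} (ht : t ∈ P) (k n : ℕ) (x : V)
    (hkn : k < n) (hoff : ∀ j ≤ k, ς^[j] x ∉ P) :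
    (ς^[k] x, ς (ς^[k] x)) ∈ walkEdges (seg P ς t n x) := by
  induction k generalizing n x with
  | zero =>
    obtain ⟨n, rfl⟩ := Nat.exists_eq_add_of_lt hkn
    have hx : x ∉ P := hoff 0 le_rfl
    have hxt : x ≠ t := fun h => hx (h ▸ ht)
    rw [seg_succ ς _ hx hxt, walkEdges_cons_seg]
    exact List.mem_cons_self
  | succ k ih =>
    obtain ⟨n, rfl⟩ : ∃ m, n = m + 1 := ⟨n - 1, by omega⟩
    have hx : x ∉ P := hoff 0 (Nat.zero_le _)
    have hxt : x ≠ t := fun h => hx (h ▸ ht)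
    rw [seg_succ ς _ hx hxt, walkEdges_cons_seg]
    exact List.mem_cons_of_mem _ (ih n (ς x) (by omega) fun j hj => hoff (j + 1) (by omega))

end Seg

/-! ### The MinMaxPathApprox configuration -/

section MMPA

variable {G : TaskGraph V} {β : ℝ} {P : List V} {ς : V → V} {c' : V × V → ℝ}

theorem minmaxRho_nonneg (G : TaskGraph V) (β : ℝ) : 0 ≤ minmaxRho G β := by
  apply Real.sInf_nonneg
  rintro _ ⟨p, -, rfl⟩
  exact maxEdge_nonneg _ _

theorem seg_edges_mem (hς : IsCheapestSucc G ς) (ht : G.t ∈ P) (n : ℕ) (x : V) :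
    ∀ e ∈ walkEdges (seg P ς G.t n x), e ∈ G.E := by
  induction n generalizing x with
  | zero => intro e he; simp [seg_zero, walkEdges] at he
  | succ n ih =>
    by_cases hx : x ∈ P
    · intro e he; simp [seg_of_mem _ _ _ hx, walkEdges] at he
    · have hxt : x ≠ G.t := fun h => hx (h ▸ ht)
      rw [seg_succ ς n hx hxt, walkEdges_cons_seg]
      intro e he
      rcases List.mem_cons.1 he with rfl | he
      · exact (hς x hxt).1
      · exact ih _ e he

theorem extra_of_leaving (h : IsMMPA G β P ς c') {v : V} (hvP : v ∈ P) (hvt : v ≠ G.t)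
    (hne : (v, ς v) ∉ walkEdges P) :
    c' (v, ς v) = maxEdge G.c (v :: seg P ς G.t (Fintype.card V - 1) (ς v)) := by
  rw [h.2.2.2.2.2 v _ hne rfl hvP]
  have hpos : 0 < Fintype.card V := Fintype.card_pos_iff.2 ⟨v⟩
  obtain ⟨m, hm⟩ : ∃ m, Fintype.card V = m + 1 := ⟨Fintype.card V - 1, by omega⟩
  simp [hm, sigmaWalk, hvt, seg]

theorem config_nonneg (hβ0 : 0 < β) (h : IsMMPA G β P ς c') : CostConfig c' := by
  obtain ⟨-, -, h1, h2, h3, h4⟩ := h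
  rintro ⟨v, w⟩
  by_cases he : (v, w) ∈ walkEdges P
  · exact (h1 _ he).ge
  by_cases hw : w = ς v
  · by_cases hv : v ∈ P
    · rw [h4 v w he hw hv]; exact maxEdge_nonneg _ _
    · exact (h2 v w he hw hv).ge
  · rw [h3 v w he hw]
    have := minmaxRho_nonneg G β
    positivity

theorem addc_nonneg (hc' : CostConfig c') : ∀ e ∈ G.E, 0 ≤ addc G c' e :=
  fun e he => add_nonneg (G.c_nonneg e he) (hc' e)

/-- Following `ς` gives `d_c̃ ≤ 2 d`. For the induction, the original cost of the segment
from `x` to the next node of `P`, which pays for the preceding exit from `P`, is added on the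
left. -/
theorem dcost_add_seg_le (hβ0 : 0 < β) (h : IsMMPA G β P ς c') (x : V) (n : ℕ) :
    dcost G.E (addc G c') G.t x + walkCost G.c (seg P ς G.t n x) ≤ 2 * dcost G.E G.c G.t x := by
  have hc := addc_nonneg (G := G) (config_nonneg hβ0 h)
  have ht : G.t ∈ P := target_mem h.1.1
  induction x using (edge_wf G).induction generalizing n with
  | _ x ih =>
    by_cases hxt : x = G.t
    · subst hxt
      rw [dcost_target hc, dcost_target G.c_nonneg, seg_of_mem _ _ _ ht]
      simp [walkCost, walkEdges]
    obtain ⟨hE, hd⟩ := h.2.1 x hxt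
    have hle := dcost_le hc hE
    have hcx := G.c_nonneg _ hE
    simp only [addc] at hle
    by_cases hx : x ∈ P
    · rw [seg_of_mem _ _ _ hx]
      have h0 : walkCost G.c [x] = 0 := by simp [walkCost, walkEdges]
      by_cases he : (x, ς x) ∈ walkEdges P
      · have h1 := h.2.2.1 _ he
        have h2 := ih _ hE 0
        have h3 : walkCost G.c (seg P ς G.t 0 (ς x)) = 0 := by
          simp [seg_zero, walkCost, walkEdges]
        linarith
      · have h1 := extra_of_leaving h hx hxt he
        have h2 := ih _ hE (Fintype.card V - 1)
        have h3 := maxEdge_le_walkCost G.c (x :: seg P ς G.t (Fintype.card V - 1) (ς x)) (by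
          rw [walkEdges_cons_seg]
          intro e he'
          rcases List.mem_cons.1 he' with rfl | he'
          · exact hcx
          · exact G.c_nonneg _ (seg_edges_mem h.2.1 ht _ _ _ he'))
        rw [walkCost_cons_seg] at h3
        linarith
    · have h1 := h.2.2.2.1 x _ (fun he => hx (mem_of_walkEdges he).1) rfl hx
      cases n with
      | zero =>
        have h2 := ih _ hE 0
        have h3 (y : V) : walkCost G.c (seg P ς G.t 0 y) = 0 := by
          simp [seg_zero, walkCost, walkEdges]
        rw [h3] at h2 ⊢
        linarith
      | succ n =>
        have h2 := ih _ hE n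
        rw [seg_succ ς n hx hxt, walkCost_cons_seg]
        linarith

theorem dcost_le_two_mul (hβ0 : 0 < β) (h : IsMMPA G β P ς c') (x : V) :
    dcost G.E (addc G c') G.t x ≤ 2 * dcost G.E G.c G.t x := by
  have h1 := dcost_add_seg_le hβ0 h x 0
  simpa [seg_zero, walkCost, walkEdges] using h1

theorem zetaCost_le_of_mem (hβ0 : 0 < β) (h : IsMMPA G β P ς c') {v : V} (hv : v ∈ P)
    (hvt : v ≠ G.t) : zetaCost G.E (addc G c') G.t β v ≤ 2 * minmaxRho G β := by
  obtain ⟨w, hw⟩ := exists_walkEdges_of_mem h.1.1 hv hvt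
  have hE := walkEdges_subset h.1.1.1 _ hw
  have h1 := zetaCost_le (addc G c') β hE
  have h2 := le_maxEdge (etaCost G.E G.c G.t β) P _ hw
  rw [h.1.2] at h2
  have h3 := h.2.2.1 _ hw
  have h4 := mul_le_mul_of_nonneg_left (dcost_le_two_mul hβ0 h w) hβ0.le
  have h5 := G.c_nonneg _ hE
  simp only [etaCost, addc] at h1 h2 h4
  linarith

theorem succ_of_cheap (h : IsMMPA G β P ς c')
    {v w : V} (hE : (v, w) ∈ G.E) (he : (v, w) ∉ walkEdges P)
    (hlt : addc G c' (v, w) < 3 * minmaxRho G β / β) : w = ς v := by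
  by_contra hne
  have h1 := h.2.2.2.2.1 v w he hne
  have h2 := G.c_nonneg _ hE
  simp only [addc] at hlt
  linarith

/-- `v` lies off `P` and is reached by leaving `P` at `v'` along `ς`, at perceived cost at most
`2ϱ`, and then following `ς` for `k` further steps without meeting `P`. -/
def IsDetour (G : TaskGraph V) (β : ℝ) (P : List V) (ς : V → V) (c' : V × V → ℝ)
    (v' : V) (k : ℕ) (v : V) : Prop :=
  v' ∈ P ∧ v' ≠ G.t ∧ v = ς^[k] (ς v') ∧ (∀ j ≤ k, ς^[j] (ς v') ∉ P) ∧
    etaCost G.E (addc G c') G.t β (v', ς v') ≤ 2 * minmaxRho G β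

theorem isWalk_iterate (hς : IsCheapestSucc G ς) (k : ℕ) (x : V)
    (hoff : ∀ j ≤ k, ς^[j] x ≠ G.t) :
    ∃ l : List V, l.length = k + 2 ∧ IsWalk G.E l ∧ l.head? = some x := by
  induction k generalizing x with
  | zero => exact ⟨[x, ς x], rfl, List.isChain_pair.2 (hς x (hoff 0 le_rfl)).1, rfl⟩
  | succ k ih =>
    obtain ⟨l, h1, h2, h3⟩ := ih (ς x) fun j hj => hoff (j + 1) (by omega)
    cases l with
    | nil => simp at h3
    | cons a l =>
      simp only [List.head?_cons, Option.some.injEq] at h3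
      subst h3
      exact ⟨x :: ς x :: l, by simpa using h1,
        List.isChain_cons_cons.2 ⟨(hς x (hoff 0 (Nat.zero_le _))).1, h2⟩, rfl⟩

theorem detour_eta_le (hβ0 : 0 < β) (hρ : 0 < minmaxRho G β)
    (h : IsMMPA G β P ς c') {v' v : V} {k : ℕ} (hd : IsDetour G β P ς c' v' k v) :
    etaCost G.E (addc G c') G.t β (v, ς v) ≤ 2 * minmaxRho G β := by
  obtain ⟨hv'P, hv't, rfl, hoff, heta⟩ := hd
  have hcc := config_nonneg hβ0 h
  have hc := addc_nonneg (G := G) hcc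
  have ht : G.t ∈ P := target_mem h.1.1
  have hofft : ∀ j ≤ k, ς^[j] (ς v') ≠ G.t := fun j hj he => hoff j hj (he ▸ ht)
  have hne : (v', ς v') ∉ walkEdges P := fun he => hoff 0 (Nat.zero_le _) (mem_of_walkEdges he).2
  have hE' := (h.2.1 v' hv't).1
  have hvP := hoff k le_rfl
  -- the whole detour is a walk without repetitions, so the fuel of `sigmaWalk` suffices
  have hcard : k < Fintype.card V - 1 := by
    obtain ⟨l, h1, h2, -⟩ := isWalk_iterate h.2.1 (k + 1) v' (by
      intro j hj
      cases j with
      | zero => exact hv't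
      | succ j => exact hofft j (by omega))
    have := (G.acyclic l h2).length_le_card
    omega
  have hmax : G.c (ς^[k] (ς v'), ς (ς^[k] (ς v'))) ≤ c' (v', ς v') := by
    rw [extra_of_leaving h hv'P hv't hne]
    apply le_maxEdge
    rw [walkEdges_cons_seg]
    exact List.mem_cons_of_mem _ (iterate_mem_seg ht k _ _ hcard hoff)
  have hcv' := hc _ hE'
  have hmul (x : ℝ) : 3 * minmaxRho G β / β ≤ x ↔ 3 * minmaxRho G β ≤ β * x := by
    rw [div_le_iff₀ hβ0, mul_comm x]
  -- the cheapest plan from `ς v'` avoids expensive edges, hence follows `ς` up to `P`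
  have hdec : ∀ j ≤ k + 1,
      dcost G.E (addc G c') G.t (ς^[j] (ς v')) ≤ dcost G.E (addc G c') G.t (ς v') := by
    intro j
    induction j with
    | zero => intro _; exact le_rfl
    | succ j ih =>
      intro hj
      have ihj := ih (by omega)
      obtain ⟨w, hw, heq⟩ := exists_dcost_step hc (hofft j (by omega))
      have hdw := dcost_nonneg hc w
      have hws := succ_of_cheap h hw
        (fun he => hoff j (by omega) (mem_of_walkEdges he).1) (by
          by_contra hcon
          rw [not_lt] at hcon
          have h1 : 3 * minmaxRho G β / β ≤ dcost G.E (addc G c') G.t (ς v') := by linarith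
          rw [hmul] at h1
          simp only [etaCost] at heta
          linarith)
      rw [Function.iterate_succ_apply', ← hws]
      have := hc _ hw
      linarith
  have h1 := hdec (k + 1) le_rfl
  rw [Function.iterate_succ_apply'] at h1
  have h2 := mul_le_mul_of_nonneg_left h1 hβ0.le
  have h3 := h.2.2.2.1 (ς^[k] (ς v')) _ (fun he => hvP (mem_of_walkEdges he).1) rfl hvP
  have h4 := G.c_nonneg _ hE'
  simp only [etaCost, addc] at heta ⊢ h2
  linarith

theorem zetaCost_le_of_reach (hβ0 : 0 < β) (hβ1 : β ≤ 1) (h : IsMMPA G β P ς c') (r : ℝ) {v : V}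
    (hv : AgentReach G.E (addc G c') G.s G.t β r v) (hvt : v ≠ G.t) :
    zetaCost G.E (addc G c') G.t β v ≤ 2 * minmaxRho G β := by
  have hc := addc_nonneg (G := G) (config_nonneg hβ0 h)
  have ht : G.t ∈ P := target_mem h.1.1
  rcases (minmaxRho_nonneg G β).eq_or_lt with hρ | hρ
  · -- `ϱ = 0`: a step of perceived cost `0` leads to a node `w` with `d_c̃(w) = 0`
    induction hv with
    | start => exact zetaCost_le_of_mem hβ0 h (source_mem h.1.1) hvt
    | @step v w _ hs ih =>
      obtain ⟨hv, hE, -, heq, -⟩ := hs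
      have h1 := ih hv
      have h2 := hc _ hE
      simp only [etaCost] at heq
      have h3 : β * dcost G.E (addc G c') G.t w ≤ 0 := by linarith
      have h4 : dcost G.E (addc G c') G.t w ≤ 0 := nonpos_of_mul_nonpos_right h3 hβ0
      have h5 := zetaCost_le_dcost hc hβ1 hvt
      linarith
  · have hbound : ∀ v, v ≠ G.t → (v ∈ P ∨ ∃ v' k, IsDetour G β P ς c' v' k v) →
        zetaCost G.E (addc G c') G.t β v ≤ 2 * minmaxRho G β := by
      rintro v hvt (hvP | ⟨v', k, hd⟩)
      · exact zetaCost_le_of_mem hβ0 h hvP hvt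
      · exact (zetaCost_le _ _ (h.2.1 v hvt).1).trans (detour_eta_le hβ0 hρ h hd)
    refine hbound v hvt ?_
    clear hvt
    induction hv with
    | start => exact Or.inl (source_mem h.1.1)
    | @step v w _ hs ih =>
      obtain ⟨hv, hE, -, heq, -⟩ := hs
      by_cases hwP : w ∈ P
      · exact Or.inl hwP
      right
      have h1 := hbound v hv ih
      rw [← heq] at h1
      have hws : w = ς v := by
        refine succ_of_cheap h hE (fun he => hwP (mem_of_walkEdges he).2) ?_
        rw [lt_div_iff₀ hβ0]
        have h2 := mul_le_of_le_one_right (hc _ hE) hβ1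
        have h3 := mul_nonneg hβ0.le (dcost_nonneg hc w)
        simp only [etaCost] at h1
        linarith
      subst hws
      rcases ih with hvP | ⟨v', k, hv'P, hv't, rfl, hoff, heta⟩
      · refine ⟨v, 0, hvP, hv, rfl, ?_, h1⟩
        intro j hj
        obtain rfl : j = 0 := by omega
        exact hwP
      · refine ⟨v', k + 1, hv'P, hv't, (Function.iterate_succ_apply' _ _ _).symm, ?_, heta⟩
        intro j hj
        rcases hj.eq_or_lt with rfl | hj
        · rw [Function.iterate_succ_apply']; exact hwP
        · exact hoff j (by omega)

/-! ### The lower bound -/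

theorem exists_walk_of_motivating (hβ0 : 0 < β) {r : ℝ} {c'' : V × V → ℝ} (hcc : CostConfig c'')
    (hm : MotivatingConfig G β r c'') (v : V)
    (hv : AgentReach G.E (addc G c'') G.s G.t β r v) :
    ∃ p, IsWalkFrom G.E p v G.t ∧ ∀ e ∈ walkEdges p, etaCost G.E G.c G.t β e ≤ β * r := by
  induction v using (edge_wf G).induction with
  | _ v ih =>
    by_cases hvt : v = G.t
    · subst hvt
      exact ⟨[G.t], ⟨List.isChain_singleton _, rfl, rfl⟩, by simp [walkEdges]⟩
    obtain ⟨w, hs⟩ := hm v hv hvt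
    obtain ⟨p, hp, hpe⟩ := ih w hs.2.1 (hv.step hs)
    refine ⟨v :: p, isWalkFrom_cons hp hs.2.1, ?_⟩
    obtain ⟨-, h2, -⟩ := hp
    cases p with
    | nil => simp at h2
    | cons a l =>
      simp only [List.head?_cons, Option.some.injEq] at h2
      subst h2
      rw [walkEdges_cons_cons]
      intro e he
      rcases List.mem_cons.1 he with rfl | he
      · have h1 := hs.2.2.2.1.trans_le hs.2.2.2.2
        have h2 := dcost_mono G.c_nonneg (c₂ := addc G c'')
          (fun e => le_add_of_nonneg_right (hcc e)) a
        have h3 := mul_le_mul_of_nonneg_left h2 hβ0.le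
        have h4 := hcc (v, a)
        simp only [etaCost, addc] at h1 h3 ⊢
        linarith
      · exact hpe e he

theorem minmaxRho_le (hβ0 : 0 < β) {r : ℝ} (hr : 0 < r) {c'' : V × V → ℝ} (hcc : CostConfig c'')
    (hm : MotivatingConfig G β r c'') : minmaxRho G β ≤ β * r := by
  obtain ⟨p, hp, hpe⟩ := exists_walk_of_motivating hβ0 hcc hm G.s AgentReach.start
  have hbdd : BddBelow ((fun p => maxEdge (etaCost G.E G.c G.t β) p) ''
      {p : List V | IsWalkFrom G.E p G.s G.t}) := by
    refine ⟨0, ?_⟩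
    rintro _ ⟨q, -, rfl⟩
    exact maxEdge_nonneg _ _
  exact (csInf_le hbdd ⟨p, hp, rfl⟩).trans (maxEdge_le _ _ _ (by positivity) hpe)

end MMPA

/-- Under the MinMaxPathApprox cost configuration, at every node
the agent may visit on a greedy walk from `s` her lowest perceived cost is at most
`2ϱ`; consequently the configuration is motivating for the reward `2ϱ/β`. Since
every reward admitting a motivating cost configuration is at least `ϱ/β`, the
reward `2ϱ/β` is within a factor `2` of the infimum of motivating rewards. -/
theorem stmt_12 (G : TaskGraph V) (β : ℝ) (hβ0 : 0 < β) (hβ1 : β ≤ 1)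
    (P : List V) (ς : V → V) (c' : V × V → ℝ) (h : IsMMPA G β P ς c') :
    (∀ v : V, AgentReach G.E (addc G c') G.s G.t β (2 * minmaxRho G β / β) v →
        v ≠ G.t → zetaCost G.E (addc G c') G.t β v ≤ 2 * minmaxRho G β) ∧
      MotivatingConfig G β (2 * minmaxRho G β / β) c' ∧
      ∀ (r : ℝ) (c'' : V × V → ℝ), 0 < r → CostConfig c'' →
        MotivatingConfig G β r c'' → minmaxRho G β / β ≤ r := by
  have hβr : β * (2 * minmaxRho G β / β) = 2 * minmaxRho G β := by field_simp
  refine ⟨fun v hv hvt => zetaCost_le_of_reach hβ0 hβ1 h _ hv hvt, fun v hv hvt => ?_, ?_⟩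
  · obtain ⟨w, hE, heq⟩ := exists_eq_zetaCost G (addc G c') β hvt
    exact ⟨w, hvt, hE, reaches G w, heq,
      (zetaCost_le_of_reach hβ0 hβ1 h _ hv hvt).trans hβr.ge⟩
  · intro r c'' hr hcc hm
    rw [div_le_iff₀ hβ0, mul_comm]
    exact minmaxRho_le hβ0 hr hcc hm
end

section
/- For every β ∈ (0,1), in the task graph H(β) no cost configuration is motivating for the reward 1/β, yet for every ε with 0 < ε < (1−β)^3 the cost configuration assigning extra cost ε to the edge (v_1,w) (and 0 elsewhere) is motivating for the reward 1/β + ε. Hence the infimum of rewards admitting a motivating cost configuration equals 1/β but is not attained, i.e., H(β) admits no optimal cost configuration. -/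
/-!
Framework: task graphs, present-biased agents, perceived costs, greedy walks,
motivating rewards, cost configurations and subgraphs
(Kleinberg–Oren model, following Albers–Kraft).
-/

variable {V : Type} [Fintype V] [DecidableEq V]

/-!
Put `δ = 1 - β` and suppose `r ≤ 1/β`, so that the agent tolerates perceived costs up to `βr ≤ 1`.
She cannot enter `w`, since the edge `(w,t)` alone costs `2 - β > 1`; a motivating configuration
must therefore lead her along `v₁, v₂, v₃, v₄, t`. Evaluated from the end, the perceived costs of
`v₄, v₃, v₂, v₁` along this path are all exactly `1` in `H(β)`, so no extra cost can be put on it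
after `v₁`. The perceived cost of `(v₁,w)` is also `1` before extra costs, so some positive extra
cost has to be placed on `(v₁,w)` or `(w,t)` to break the tie. That makes `d(v₁)` strictly larger
than `1 + δ + δ²`, hence `ζ(s) > δ³ + (1 - δ)(1 + δ + δ²) = 1` and she never leaves `s`.

An extra cost `ε < δ³` on `(v₁,w)` raises `ζ(s)` to exactly `1 + βε` and breaks the tie at `v₁`, so it
is motivating for `1/β + ε`. As `ε` can be arbitrarily small, the infimum is `1/β`.

The shortest distances are computed from `t` backwards by `isLeast_walkCosts_step`, and the lowest
perceived costs by `zetaCost_eq`; `evalH` collects the resulting formulas for arbitrary costs on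
the edge set of `H(β)`, and `not_motivating` is the argument above for `r ≤ 1/β`.
-/

/-- The costs of all walks from `v` to `t`; `dcost` is the infimum of this set. -/
def walkCosts {α : Type} (E : Finset (α × α)) (c : α × α → ℝ) (t v : α) : Set ℝ :=
  walkCost c '' {p : List α | IsWalkFrom E p v t}

theorem mem_walkCosts_iff {α : Type}
    {E : Finset (α × α)} {c : α × α → ℝ} {t v : α} (hv : v ≠ t) (x : ℝ) :
    x ∈ walkCosts E c t v ↔ ∃ w, (v, w) ∈ E ∧ ∃ y ∈ walkCosts E c t w, c (v, w) + y = x := by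
  constructor
  · rintro ⟨p, ⟨hp, hh, hl⟩, rfl⟩
    match p, hp, hh, hl with
    | [], _, hh, _ => simp at hh
    | [a], _, hh, hl =>
      simp at hh hl
      exact absurd (hh.symm.trans hl) hv
    | a :: b :: q, hp, hh, hl =>
      obtain rfl : a = v := by simpa using hh
      have hp' := List.isChain_cons_cons.1 hp
      refine ⟨b, hp'.1, _, ⟨b :: q, ⟨hp'.2, rfl, ?_⟩, rfl⟩, ?_⟩
      · simpa using hl
      · simp [walkCost, walkEdges]
  · rintro ⟨w, hw, _, ⟨p, ⟨hp, hh, hl⟩, rfl⟩, rfl⟩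
    match p, hp, hh, hl with
    | [], _, hh, _ => simp at hh
    | b :: q, hp, hh, hl =>
      obtain rfl : b = w := by simpa using hh
      refine ⟨v :: b :: q, ⟨List.isChain_cons_cons.2 ⟨hw, hp⟩, rfl, ?_⟩, ?_⟩
      · simpa using hl
      · simp [walkCost, walkEdges]

theorem isLeast_walkCosts_target {α : Type}
    {E : Finset (α × α)} (c : α × α → ℝ) {t : α}
    (ht : ∀ w, (t, w) ∉ E) : IsLeast (walkCosts E c t t) 0 := by
  refine ⟨⟨[t], ⟨List.isChain_singleton _, rfl, rfl⟩, by simp [walkCost, walkEdges]⟩, ?_⟩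
  rintro _ ⟨p, ⟨hp, hh, hl⟩, rfl⟩
  match p, hp, hh, hl with
  | [], _, hh, _ => simp at hh
  | [a], _, _, _ => simp [walkCost, walkEdges]
  | a :: b :: q, hp, hh, _ =>
    obtain rfl : a = t := by simpa using hh
    exact absurd (List.isChain_cons_cons.1 hp).1 (ht b)

/-- Bellman's equation at a node with out-neighbours `w₁` and `w₂`; a node with a single
out-neighbour is the case `w₁ = w₂`. -/
theorem isLeast_walkCosts_step {α : Type}
    {E : Finset (α × α)} {c : α × α → ℝ} {t v w₁ w₂ : α} {d₁ d₂ : ℝ}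
    (hv : v ≠ t) (hE : ∀ w, (v, w) ∈ E ↔ w = w₁ ∨ w = w₂)
    (h₁ : IsLeast (walkCosts E c t w₁) d₁) (h₂ : IsLeast (walkCosts E c t w₂) d₂) :
    IsLeast (walkCosts E c t v) (min (c (v, w₁) + d₁) (c (v, w₂) + d₂)) := by
  refine ⟨?_, ?_⟩
  · rw [mem_walkCosts_iff hv]
    rcases min_choice (c (v, w₁) + d₁) (c (v, w₂) + d₂) with h | h <;> rw [h]
    · exact ⟨w₁, (hE _).2 (.inl rfl), d₁, h₁.1, rfl⟩
    · exact ⟨w₂, (hE _).2 (.inr rfl), d₂, h₂.1, rfl⟩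
  · intro x hx
    obtain ⟨w, hw, y, hy, rfl⟩ := (mem_walkCosts_iff hv x).1 hx
    rcases (hE w).1 hw with rfl | rfl
    · exact (min_le_left _ _).trans (by linarith [h₁.2 hy])
    · exact (min_le_right _ _).trans (by linarith [h₂.2 hy])

theorem zetaCost_eq {α : Type}
    {E : Finset (α × α)} {c : α × α → ℝ} {t v w₁ w₂ : α} (β : ℝ)
    (hE : ∀ w, (v, w) ∈ E ↔ w = w₁ ∨ w = w₂) (h₁ : Reaches E w₁ t) (h₂ : Reaches E w₂ t) :
    zetaCost E c t β v = min (etaCost E c t β (v, w₁)) (etaCost E c t β (v, w₂)) := by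
  refine IsLeast.csInf_eq ⟨?_, ?_⟩
  · rcases min_choice (etaCost E c t β (v, w₁)) (etaCost E c t β (v, w₂)) with h | h <;> rw [h]
    · exact ⟨w₁, (hE _).2 (.inl rfl), h₁, rfl⟩
    · exact ⟨w₂, (hE _).2 (.inr rfl), h₂, rfl⟩
  · rintro _ ⟨w, hw, -, rfl⟩
    rcases (hE w).1 hw with rfl | rfl
    · exact min_le_left _ _
    · exact min_le_right _ _

/-- The edge set of `H(β)`. -/
abbrev edgesH : Finset (Fin 7 × Fin 7) :=
  {((0 : Fin 7), (1 : Fin 7)), (1, 2), (2, 3), (3, 4), (4, 6), (1, 5), (5, 6)}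

/-- The greedy steps on the edge set of `H(β)` under arbitrary costs. The two conditions at node
`1 = v₁` compare the perceived costs of its two outgoing edges. -/
theorem evalH (c : Fin 7 × Fin 7 → ℝ) (β r : ℝ) :
    let d₂ := c (2, 3) + (c (3, 4) + c (4, 6))
    let d₁ := min (c (1, 2) + d₂) (c (1, 5) + c (5, 6))
    let a := c (1, 2) + β * d₂
    let b := c (1, 5) + β * c (5, 6)
    (∀ v w, GreedyStep edgesH c 6 β r v w ↔
      (v = 0 ∧ w = 1 ∧ c (0, 1) + β * d₁ ≤ β * r) ∨
      (v = 1 ∧ w = 2 ∧ a ≤ b ∧ a ≤ β * r) ∨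
      (v = 1 ∧ w = 5 ∧ b ≤ a ∧ b ≤ β * r) ∨
      (v = 2 ∧ w = 3 ∧ c (2, 3) + β * (c (3, 4) + c (4, 6)) ≤ β * r) ∨
      (v = 3 ∧ w = 4 ∧ c (3, 4) + β * c (4, 6) ≤ β * r) ∨
      (v = 4 ∧ w = 6 ∧ c (4, 6) ≤ β * r) ∨
      (v = 5 ∧ w = 6 ∧ c (5, 6) ≤ β * r)) := by
  intro d₂ d₁ a b
  have e0 : ∀ w, ((0 : Fin 7), w) ∈ edgesH ↔ w = 1 ∨ w = 1 := by decide
  have e1 : ∀ w, ((1 : Fin 7), w) ∈ edgesH ↔ w = 2 ∨ w = 5 := by decide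
  have e2 : ∀ w, ((2 : Fin 7), w) ∈ edgesH ↔ w = 3 ∨ w = 3 := by decide
  have e3 : ∀ w, ((3 : Fin 7), w) ∈ edgesH ↔ w = 4 ∨ w = 4 := by decide
  have e4 : ∀ w, ((4 : Fin 7), w) ∈ edgesH ↔ w = 6 ∨ w = 6 := by decide
  have e5 : ∀ w, ((5 : Fin 7), w) ∈ edgesH ↔ w = 6 ∨ w = 6 := by decide
  have e6 : ∀ w, ((6 : Fin 7), w) ∉ edgesH := by decide
  have l6 : IsLeast (walkCosts edgesH c 6 6) 0 := isLeast_walkCosts_target c e6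
  have l5 := isLeast_walkCosts_step (by decide) e5 l6 l6
  have l4 := isLeast_walkCosts_step (by decide) e4 l6 l6
  rw [min_self, add_zero] at l5 l4
  have l3 := isLeast_walkCosts_step (by decide) e3 l4 l4
  rw [min_self] at l3
  have l2 := isLeast_walkCosts_step (by decide) e2 l3 l3
  rw [min_self] at l2
  have l1 := isLeast_walkCosts_step (by decide) e1 l2 l5
  have reach : ∀ {v : Fin 7} {d : ℝ}, IsLeast (walkCosts edgesH c 6 v) d →
      Reaches edgesH v 6 := by
    rintro v d ⟨⟨p, hp, -⟩, -⟩
    exact ⟨p, hp⟩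
  have eta : ∀ {v w : Fin 7} {d : ℝ}, IsLeast (walkCosts edgesH c 6 w) d →
      etaCost edgesH c 6 β (v, w) = c (v, w) + β * d := by
    intro v w d h
    have hd : dcost edgesH c 6 w = d := h.csInf_eq
    simp only [etaCost, hd]
  have z0 := zetaCost_eq (c := c) β e0 (reach l1) (reach l1)
  have z1 := zetaCost_eq (c := c) β e1 (reach l2) (reach l5)
  have z2 := zetaCost_eq (c := c) β e2 (reach l3) (reach l3)
  have z3 := zetaCost_eq (c := c) β e3 (reach l4) (reach l4)
  have z4 := zetaCost_eq (c := c) β e4 (reach l6) (reach l6)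
  have z5 := zetaCost_eq (c := c) β e5 (reach l6) (reach l6)
  rw [min_self] at z0 z2 z3 z4 z5
  -- the only greedy step at a node with a single out-neighbour
  have single : ∀ {v u : Fin 7} {d : ℝ}, v ≠ 6 → (∀ w, (v, w) ∈ edgesH ↔ w = u ∨ w = u) →
      IsLeast (walkCosts edgesH c 6 u) d →
      zetaCost edgesH c 6 β v = etaCost edgesH c 6 β (v, u) →
      ∀ w, GreedyStep edgesH c 6 β r v w ↔ w = u ∧ c (v, u) + β * d ≤ β * r := by
    intro v u d hv hE hl hz w
    rw [GreedyStep, hE, hz, or_self, eta hl]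
    constructor
    · rintro ⟨-, rfl, -, -, h⟩
      exact ⟨rfl, h⟩
    · rintro ⟨rfl, h⟩
      exact ⟨hv, rfl, reach hl, eta hl, h⟩
  have s0 := single (by decide) e0 l1 z0
  have s2 := single (by decide) e2 l3 z2
  have s3 := single (by decide) e3 l4 z3
  have s4 := single (by decide) e4 l6 z4
  have s5 := single (by decide) e5 l6 z5
  have s1 : ∀ w, GreedyStep edgesH c 6 β r 1 w ↔
      (w = 2 ∧ a ≤ b ∧ a ≤ β * r) ∨ (w = 5 ∧ b ≤ a ∧ b ≤ β * r) := by
    intro w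
    rw [GreedyStep, e1, z1, eta l2, eta l5]
    constructor
    · rintro ⟨-, rfl | rfl, -, h, h'⟩
      · rw [eta l2] at h
        exact .inl ⟨rfl, h.le.trans (min_le_right _ _), h.le.trans h'⟩
      · rw [eta l5] at h
        exact .inr ⟨rfl, h.le.trans (min_le_left _ _), h.le.trans h'⟩
    · rintro (⟨rfl, h, h'⟩ | ⟨rfl, h, h'⟩)
      · exact ⟨by decide, .inl rfl, reach l2, by rw [eta l2, min_eq_left h],
          (min_le_left _ _).trans h'⟩
      · exact ⟨by decide, .inr rfl, reach l5, by rw [eta l5, min_eq_right h],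
          (min_le_right _ _).trans h'⟩
  have s6 : ∀ w, ¬ GreedyStep edgesH c 6 β r 6 w := fun w h => h.1 rfl
  intro v w
  fin_cases v
  · simpa [d₁, d₂] using s0 w
  · simpa using s1 w
  · simpa using s2 w
  · simpa using s3 w
  · simpa using s4 w
  · simpa using s5 w
  · simpa using s6 w

/-- With `x` denoting the extra costs, no configuration motivates the agent when the largest
tolerated perceived cost `β r` is at most `1`. -/
theorem not_motivating {β r : ℝ} (hβ0 : 0 < β) (hβ1 : β < 1) (hr : β * r ≤ 1)
    {c x : Fin 7 × Fin 7 → ℝ} (hx : ∀ e, 0 ≤ x e)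
    (h01 : c (0, 1) = (1 - β) ^ 3 + x (0, 1)) (h12 : c (1, 2) = (1 - β) ^ 3 + x (1, 2))
    (h23 : c (2, 3) = (1 - β) ^ 2 + x (2, 3)) (h34 : c (3, 4) = 1 - β + x (3, 4))
    (h46 : c (4, 6) = 1 + x (4, 6)) (h15 : c (1, 5) = (1 - β) ^ 2 + x (1, 5))
    (h56 : c (5, 6) = 2 - β + x (5, 6)) : ¬ Motivating edgesH c 0 6 β r := by
  intro hM
  have key := evalH c β r
  simp only at key
  have p01 := hx (0, 1)
  have p12 := hx (1, 2)
  have p23 := hx (2, 3)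
  have p34 := hx (3, 4)
  have p46 := hx (4, 6)
  have p15 := hx (1, 5)
  have p56 := hx (5, 6)
  have r0 : AgentReach edgesH c 0 6 β r 0 := .start
  obtain ⟨w, hw⟩ := hM 0 r0 (by decide)
  have k0 := (key 0 w).1 hw
  simp at k0
  obtain ⟨rfl, k0⟩ := k0
  have r1 := r0.step hw
  have n5 : ¬ AgentReach edgesH c 0 6 β r 5 := by
    intro h5
    obtain ⟨u, hu⟩ := hM 5 h5 (by decide)
    have k5 := (key 5 u).1 hu
    simp at k5
    linarith [k5.2]
  obtain ⟨w, hw1⟩ := hM 1 r1 (by decide)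
  have k1 := (key 1 w).1 hw1
  simp at k1
  rcases k1 with ⟨rfl, k1, ka⟩ | ⟨rfl, -⟩
  swap
  · exact n5 (r1.step hw1)
  have k15 : ¬ _ := fun h => n5 (r1.step ((key 1 5).2 h))
  simp at k15
  have r2 := r1.step hw1
  obtain ⟨w, hw2⟩ := hM 2 r2 (by decide)
  have k2 := (key 2 w).1 hw2
  simp at k2
  obtain ⟨rfl, k2⟩ := k2
  have r3 := r2.step hw2
  obtain ⟨w, hw3⟩ := hM 3 r3 (by decide)
  have k3 := (key 3 w).1 hw3
  simp at k3
  obtain ⟨rfl, k3⟩ := k3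
  have r4 := r3.step hw3
  obtain ⟨w, hw4⟩ := hM 4 r4 (by decide)
  have k4 := (key 4 w).1 hw4
  simp at k4
  obtain ⟨rfl, k4⟩ := k4
  rw [h46] at k4
  have z46 : x (4, 6) = 0 := by linarith
  rw [h34, h46, z46] at k3
  have z34 : x (3, 4) = 0 := by linarith
  rw [h23, h34, h46, z46, z34] at k2
  have z23 : x (2, 3) = 0 := by nlinarith
  rw [h12, h23, h34, h46, z46, z34, z23] at ka
  have z12 : x (1, 2) = 0 := by nlinarith
  rw [h12, h23, h34, h46, h15, h56, z46, z34, z23, z12] at k15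
  rw [z12] at ka
  -- a tie at `v₁` would let the agent move to `w`, so some extra cost lies on `(v₁,w)` or `(w,t)`
  have hpos : 0 < x (1, 5) + β * x (5, 6) := by
    by_contra! hle
    have := k15 (by nlinarith)
    nlinarith
  have hpos' : 0 < x (1, 5) + x (5, 6) := by nlinarith
  have hd : (1 - β) ^ 2 + (1 - β) + 1 <
      min (c (1, 2) + (c (2, 3) + (c (3, 4) + c (4, 6)))) (c (1, 5) + c (5, 6)) := by
    rw [lt_min_iff, h12, h23, h34, h46, h15, h56, z46, z34, z23, z12]
    have : 0 < (1 - β) ^ 3 := pow_pos (by linarith) 3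
    constructor <;> linarith
  have := mul_lt_mul_of_pos_left hd hβ0
  rw [h01] at k0
  have e : (1 - β) ^ 3 + β * ((1 - β) ^ 2 + (1 - β) + 1) = 1 := by ring
  linarith

/-- An extra cost `ε < (1 - β)³` on `(v₁,w)` motivates the agent as soon as `1 + β ε ≤ β r`. -/
theorem motivating_of_small {β r ε : ℝ} (hβ0 : 0 < β) (hε : 0 < ε)
    (hε' : ε < (1 - β) ^ 3) (hr : 1 + β * ε ≤ β * r) {c : Fin 7 × Fin 7 → ℝ}
    (h01 : c (0, 1) = (1 - β) ^ 3) (h12 : c (1, 2) = (1 - β) ^ 3)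
    (h23 : c (2, 3) = (1 - β) ^ 2) (h34 : c (3, 4) = 1 - β)
    (h46 : c (4, 6) = 1) (h15 : c (1, 5) = (1 - β) ^ 2 + ε)
    (h56 : c (5, 6) = 2 - β) : Motivating edgesH c 0 6 β r := by
  have key := evalH c β r
  simp only [h01, h12, h23, h34, h46, h15, h56] at key
  have hβε : 0 < β * ε := mul_pos hβ0 hε
  -- the agent never visits `w`
  have hreach : ∀ v, AgentReach edgesH c 0 6 β r v → v ≠ 5 := by
    intro v hv
    cases hv with
    | start => decide
    | step _ h =>
      rintro rfl
      have h := (key _ 5).1 h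
      simp at h
      nlinarith [h.2.1]
  intro v hv hv6
  have hv5 := hreach v hv
  fin_cases v
  · refine ⟨1, (key _ _).2 (.inl ⟨rfl, rfl, ?_⟩)⟩
    rw [min_eq_right (by linarith)]
    nlinarith
  · exact ⟨2, (key _ _).2 (.inr (.inl ⟨rfl, rfl, by nlinarith, by nlinarith⟩))⟩
  · exact ⟨3, (key _ _).2 (.inr (.inr (.inr (.inl ⟨rfl, rfl, by nlinarith⟩))))⟩
  · exact ⟨4, (key _ _).2 (.inr (.inr (.inr (.inr (.inl ⟨rfl, rfl, by linarith⟩)))))⟩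
  · exact ⟨6, (key _ _).2 (.inr (.inr (.inr (.inr (.inr (.inl ⟨rfl, rfl, by linarith⟩))))))⟩
  · exact absurd rfl hv5
  · exact absurd rfl hv6

/-- In the task graph `H(β)` (nodes `0 = s`, `1 = v₁`, `2 = v₂`,
`3 = v₃`, `4 = v₄`, `5 = w`, `6 = t`), no cost configuration is motivating for the
reward `1/β`, yet for every `0 < ε < (1−β)³` the configuration assigning extra cost
`ε` to the edge `(v₁, w)` is motivating for the reward `1/β + ε`. Hence the infimum
of rewards admitting a motivating cost configuration equals `1/β` but is not
attained: `H(β)` admits no optimal cost configuration. -/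
theorem stmt_14 (β : ℝ) (hβ0 : 0 < β) (hβ1 : β < 1)
    (G : TaskGraph (Fin 7))
    (hs : G.s = 0) (ht : G.t = 6)
    (hE : G.E = {((0 : Fin 7), (1 : Fin 7)), (1, 2), (2, 3), (3, 4), (4, 6), (1, 5), (5, 6)})
    (hc01 : G.c (0, 1) = (1 - β) ^ 3) (hc12 : G.c (1, 2) = (1 - β) ^ 3)
    (hc23 : G.c (2, 3) = (1 - β) ^ 2) (hc34 : G.c (3, 4) = 1 - β)
    (hc46 : G.c (4, 6) = 1) (hc15 : G.c (1, 5) = (1 - β) ^ 2)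
    (hc56 : G.c (5, 6) = 2 - β) :
    (∀ c' : Fin 7 × Fin 7 → ℝ, CostConfig c' → ¬ MotivatingConfig G β (1 / β) c') ∧
      (∀ ε : ℝ, 0 < ε → ε < (1 - β) ^ 3 →
        MotivatingConfig G β (1 / β + ε)
          (fun e => if e = ((1 : Fin 7), (5 : Fin 7)) then ε else 0)) ∧
      sInf {r : ℝ | 0 < r ∧ ∃ c' : Fin 7 × Fin 7 → ℝ,
        CostConfig c' ∧ MotivatingConfig G β r c'} = 1 / β := by
  have lower : ∀ r : ℝ, β * r ≤ 1 → ∀ c' : Fin 7 × Fin 7 → ℝ, CostConfig c' →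
      ¬ MotivatingConfig G β r c' := by
    intro r hr c' hc'
    rw [MotivatingConfig, hE, hs, ht]
    exact not_motivating hβ0 hβ1 hr hc' (by rw [addc, hc01]) (by rw [addc, hc12])
      (by rw [addc, hc23]) (by rw [addc, hc34]) (by rw [addc, hc46]) (by rw [addc, hc15])
      (by rw [addc, hc56])
  have upper : ∀ ε : ℝ, 0 < ε → ε < (1 - β) ^ 3 →
      MotivatingConfig G β (1 / β + ε)
        (fun e => if e = ((1 : Fin 7), (5 : Fin 7)) then ε else 0) := by
    intro ε hε hε'
    rw [MotivatingConfig, hE, hs, ht]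
    have hr : 1 + β * ε ≤ β * (1 / β + ε) := by
      rw [mul_add, mul_one_div_cancel hβ0.ne']
    exact motivating_of_small hβ0 hε hε' hr (by simp [addc, hc01]) (by simp [addc, hc12])
      (by simp [addc, hc23]) (by simp [addc, hc34]) (by simp [addc, hc46])
      (by simp [addc, hc15]) (by simp [addc, hc56])
  have hδ : 0 < (1 - β) ^ 3 := pow_pos (by linarith) 3
  have hβ' : 0 < 1 / β := by positivity
  have mem : ∀ ε : ℝ, 0 < ε → ε < (1 - β) ^ 3 → 1 / β + ε ∈ {r : ℝ | 0 < r ∧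
      ∃ c' : Fin 7 × Fin 7 → ℝ, CostConfig c' ∧ MotivatingConfig G β r c'} := by
    intro ε hε hε'
    refine ⟨by linarith, _, fun e => ?_, upper ε hε hε'⟩
    split_ifs
    exacts [hε.le, le_rfl]
  refine ⟨fun c' => lower _ (mul_one_div_cancel hβ0.ne').le c', upper, ?_⟩
  refine csInf_eq_of_forall_ge_of_forall_gt_exists_lt
    ⟨_, mem ((1 - β) ^ 3 / 2) (by linarith) (by linarith)⟩ ?_ ?_
  · rintro r ⟨-, c', hc', hm⟩
    by_contra! h
    refine lower r ?_ c' hc' hm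
    rw [lt_div_iff₀ hβ0] at h
    linarith
  · intro y hy
    have hmin : 0 < min ((1 - β) ^ 3) (y - 1 / β) := lt_min hδ (by linarith)
    have h1 := min_le_left ((1 - β) ^ 3) (y - 1 / β)
    have h2 := min_le_right ((1 - β) ^ 3) (y - 1 / β)
    exact ⟨_, mem (min ((1 - β) ^ 3) (y - 1 / β) / 2) (by linarith) (by linarith), by linarith⟩
end
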